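/- Let X be a real random variable that is symmetric about 0, whose distribution is unimodal with mode 0, and with E[X²] = 1. Then for every k ≥ 2/√3, the probability that X ≥ k is at most 2/(9k²); and for every k with 0 < k < 2/√3, the probability that X ≥ k is at most 1/2 - k/(2√3). -/

import Mathlib

open MeasureTheory

/-- A probability measure on `ℝ` is unimodal with mode `m` if it is absolutely continuous with
respect to Lebesgue measure with a density that is nondecreasing on `(-∞, m]` and nonincreasing
on `[m, ∞)`. -/
def IsUnimodalWithMode (P : Measure ℝ) (m : ℝ) : Prop :=
  ∃ f : ℝ → ENNReal, P = volume.withDensity f ∧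
    MonotoneOn f (Set.Iic m) ∧ AntitoneOn f (Set.Ici m)

lemma gauss_aux (P : Measure ℝ) [IsProbabilityMeasure P]
    (hsymm : P.map (fun x => -x) = P)
    (hU : IsUnimodalWithMode P 0)
    (hInt : Integrable (fun x => x ^ 2) P)
    (hvar : (∫ x, x ^ 2 ∂P) = 1) (a b k t : ℝ) (ha : 0 ≤ a) (hb : 0 ≤ b) (hk : 0 < k)
    (hkt : k ≤ t) (h1 : a + b * t ^ 2 = 1) (h2 : a * t + b * t ^ 3 / 3 = t - k) :
    (P (Set.Ici k)).toReal ≤ (a + b) / 2 := by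
  obtain ⟨f, hP, -, hf⟩ := hU
  -- finiteness of the density
  have hfin : ∀ x, 0 < x → f x < ⊤ := by
    intro x hx
    by_contra h
    have htop : f x = ⊤ := by simpa using h
    have h3 : ∫⁻ y in Set.Ioc 0 x, f x ≤ ∫⁻ y in Set.Ioc 0 x, f y := by
      apply setLIntegral_mono' measurableSet_Ioc
      intro y hy
      exact hf (Set.mem_Ici.2 hy.1.le) (Set.mem_Ici.2 hx.le) hy.2
    rw [← withDensity_apply f measurableSet_Ioc, ← hP, htop] at h3
    have h4 : P (Set.Ioc 0 x) ≤ 1 := prob_le_one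
    have h5 := h3.trans h4
    simp [ENNReal.top_mul, hx] at h5
  have hae : AEMeasurable f (volume.restrict (Set.Ioi 0)) :=
    aemeasurable_restrict_of_antitoneOn measurableSet_Ioi (hf.mono Set.Ioi_subset_Ici_self)
  have hft : ∀ᵐ x ∂(volume.restrict (Set.Ioi (0 : ℝ))), f x < ⊤ :=
    (ae_restrict_iff' measurableSet_Ioi).2 (Filter.Eventually.of_forall hfin)
  have hν : P.restrict (Set.Ioi 0) = (volume.restrict (Set.Ioi 0)).withDensity f := by
    rw [hP, restrict_withDensity measurableSet_Ioi]
  have hna : NullSingletonClass P := by rw [hP]; infer_instance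
  -- symmetric halves
  have hφ : Integrable (fun x : ℝ => a + b * x ^ 2) P := (integrable_const a).add (hInt.const_mul b)
  have htot : ∫ x, (a + b * x ^ 2) ∂P = a + b := by
    rw [integral_add (integrable_const a) (hInt.const_mul b), integral_const_mul, hvar]
    simp
  have hmp : MeasurePreserving (fun x : ℝ => -x) P P := ⟨measurable_neg, hsymm⟩
  have hhalf : ∫ x in Set.Ioi 0, (a + b * x ^ 2) ∂P = (a + b) / 2 := by
    have e1 := integral_add_compl (measurableSet_Ioi (a := (0 : ℝ))) hφ
    have e2 := hmp.setIntegral_preimage_emb (MeasurableEquiv.neg ℝ).measurableEmbedding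
      (fun x => a + b * x ^ 2) (Set.Ioi 0)
    have e3 : (fun x : ℝ => -x) ⁻¹' Set.Ioi 0 = Set.Iio 0 := by ext; simp
    rw [e3] at e2
    simp only [neg_sq] at e2
    rw [Set.compl_Ioi, integral_Iic_eq_integral_Iio, e2, htot] at e1
    linarith
  -- the test function
  set g : ℝ → ℝ := fun x => (a + b * x ^ 2) - (Set.Ici k).indicator (fun _ => 1) x with hg
  have hind : Integrable ((Set.Ici k).indicator (fun _ => (1 : ℝ))) (P.restrict (Set.Ioi 0)) :=
    (integrable_const 1).indicator measurableSet_Ici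
  have hgi : Integrable g (P.restrict (Set.Ioi 0)) := hφ.restrict.sub hind
  have hgint : ∫ x in Set.Ioi 0, g x ∂P = (a + b) / 2 - (P (Set.Ici k)).toReal := by
    rw [hg, integral_sub hφ.restrict hind, hhalf, integral_indicator measurableSet_Ici,
      Measure.restrict_restrict measurableSet_Ici,
      (Set.inter_eq_left.2 (fun x hx => lt_of_lt_of_le hk hx) : Set.Ici k ∩ Set.Ioi 0 = Set.Ici k)]
    simp [Measure.real]
  rw [hν] at hgi hgint
  rw [integrable_withDensity_iff_integrable_smul₀' hae hft] at hgi
  rw [integral_withDensity_eq_integral_toReal_smul₀ hae hft] at hgint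
  -- the comparison function
  set c := (f k).toReal with hc
  have ht : 0 < t := hk.trans_le hkt
  set H : ℝ → ℝ := fun x => (Set.Ioc 0 t).indicator (fun x => c * (a + b * x ^ 2)) x
    - (Set.Icc k t).indicator (fun _ => c) x with hH
  have i1 : Integrable ((Set.Ioc 0 t).indicator (fun x => c * (a + b * x ^ 2)))
      (volume.restrict (Set.Ioi 0)) := by
    refine Integrable.restrict ?_
    rw [integrable_indicator_iff measurableSet_Ioc]
    exact (Continuous.integrableOn_Icc (by fun_prop)).mono_set Set.Ioc_subset_Icc_self
  have i2 : Integrable ((Set.Icc k t).indicator (fun _ => c))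
      (volume.restrict (Set.Ioi 0)) := by
    refine Integrable.restrict ?_
    rw [integrable_indicator_iff measurableSet_Icc]
    exact Continuous.integrableOn_Icc (by fun_prop)
  have hHi : Integrable H (volume.restrict (Set.Ioi 0)) := i1.sub i2
  have hHint : ∫ x in Set.Ioi 0, H x = 0 := by
    rw [hH, integral_sub i1 i2, integral_indicator measurableSet_Ioc,
      integral_indicator measurableSet_Icc, Measure.restrict_restrict measurableSet_Ioc,
      Measure.restrict_restrict measurableSet_Icc,
      (Set.inter_eq_left.2 (fun x hx => hx.1) : Set.Ioc 0 t ∩ Set.Ioi 0 = Set.Ioc 0 t),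
      (Set.inter_eq_left.2 (fun x hx => lt_of_lt_of_le hk hx.1) :
        Set.Icc k t ∩ Set.Ioi 0 = Set.Icc k t),
      ← intervalIntegral.integral_of_le ht.le]
    have e : ∫ x in (0 : ℝ)..t, c * (a + b * x ^ 2) = c * (a * t + b * t ^ 3 / 3) := by
      rw [intervalIntegral.integral_const_mul, intervalIntegral.integral_add
        (by simp) (Continuous.intervalIntegrable (by fun_prop) _ _),
        intervalIntegral.integral_const_mul, integral_pow]
      simp
      left
      ring
    rw [e, h2]
    simp [Measure.real, hkt]
    ring
  have hmono : ∫ x in Set.Ioi 0, H x ≤ ∫ x in Set.Ioi 0, (f x).toReal • g x := by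
    refine setIntegral_mono_on hHi hgi measurableSet_Ioi ?_
    intro x hx
    have hx : 0 < x := hx
    have hF : 0 ≤ (f x).toReal := ENNReal.toReal_nonneg
    have hp : 0 ≤ a + b * x ^ 2 := by positivity
    simp only [hH, hg, Set.indicator, Set.mem_Ioc, Set.mem_Icc, Set.mem_Ici, smul_eq_mul, hx,
      true_and]
    by_cases hxk : k ≤ x
    · have hFc : (f x).toReal ≤ c :=
        ENNReal.toReal_mono (hfin k hk).ne (hf (Set.mem_Ici.2 hk.le) (Set.mem_Ici.2 hx.le) hxk)
      by_cases hxt : x ≤ t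
      · simp only [hxk, hxt, and_self, if_true]
        have : b * x ^ 2 ≤ b * t ^ 2 := by gcongr
        nlinarith
      · simp only [hxk, hxt, and_false, if_true, if_false]
        have : b * t ^ 2 ≤ b * x ^ 2 := by gcongr; exact (not_le.1 hxt).le
        nlinarith
    · have hxk' := (not_le.1 hxk).le
      have hFc : c ≤ (f x).toReal :=
        ENNReal.toReal_mono (hfin x hx).ne (hf (Set.mem_Ici.2 hx.le) (Set.mem_Ici.2 hk.le) hxk')
      simp only [hxk, hxk'.trans hkt, false_and, if_true, if_false, sub_zero]
      gcongr
  rw [hHint, hgint] at hmono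
  linarith

/-- **One-sided Gauss bound for symmetric unimodal distributions.** If `X` is a real random
variable (given by its law `P`) symmetric about `0`, unimodal with mode `0`, and `E[X²] = 1`,
then `P[X ≥ k] ≤ 2/(9k²)` for `k ≥ 2/√3`, and `P[X ≥ k] ≤ 1/2 - k/(2√3)` for
`0 < k < 2/√3`. -/
theorem symmetric_unimodal_tail_bound
    (P : Measure ℝ) [IsProbabilityMeasure P]
    (hsymm : P.map (fun x => -x) = P)
    (hU : IsUnimodalWithMode P 0)
    (hInt : Integrable (fun x => x ^ 2) P)
    (hvar : (∫ x, x ^ 2 ∂P) = 1) :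
    (∀ k : ℝ, 2 / Real.sqrt 3 ≤ k →
      (P (Set.Ici k)).toReal ≤ 2 / (9 * k ^ 2)) ∧
    (∀ k : ℝ, 0 < k → k < 2 / Real.sqrt 3 →
      (P (Set.Ici k)).toReal ≤ 1 / 2 - k / (2 * Real.sqrt 3)) := by
  have h3 : Real.sqrt 3 ^ 2 = 3 := Real.sq_sqrt (by norm_num)
  have hs : 0 < Real.sqrt 3 := by positivity
  constructor
  · intro k hk
    have hk0 : 0 < k := lt_of_lt_of_le (by positivity) hk
    have := gauss_aux P hsymm hU hInt hvar 0 (4 / (9 * k ^ 2)) k (3 * k / 2) le_rfl (by positivity)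
      hk0 (by linarith) (by field_simp; norm_num) (by field_simp; norm_num)
    refine this.trans (le_of_eq ?_)
    field_simp
    norm_num
  · intro k hk0 hk
    rw [lt_div_iff₀ hs] at hk
    have e : k / (2 * Real.sqrt 3) = k * Real.sqrt 3 / 6 := by
      rw [div_eq_div_iff (by positivity) (by norm_num)]
      linear_combination (-2 * k) * h3
    have := gauss_aux P hsymm hU hInt hvar (1 - k * Real.sqrt 3 / 2) (k * Real.sqrt 3 / 6) k
      (Real.sqrt 3) (by linarith) (by positivity) hk0 (by nlinarith)
      (by rw [h3]; ring)
      (by linear_combination (-k / 2 + k / 18 * (Real.sqrt 3 ^ 2 + 3)) * h3)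
    rw [e]
    linarith
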